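/- Let A be an associative unital algebra over a field K of characteristic zero, let δ_1, …, δ_s be pairwise commuting locally nilpotent K-derivations of A, and suppose there are elements x_1, …, x_s ∈ A with δ_i(x_j) = δ_{ij}·1 for all i, j. Set C := ∩_{i=1}^s ker δ_i. Then x_i x_j − x_j x_i ∈ C for all i, j, and A = ⊕_{α∈ℕ^s} C·x^α, i.e. the ordered monomials x^α := x_1^{α_1}⋯x_s^{α_s} (α ∈ ℕ^s) form a basis of A as a free left C-module. -/

import Mathlib

/-!
Each `δ i` kills `1`, so `δ k [x i, x j] = 0` is the Leibniz rule.

The formula behind the rest is `δ i (c x^α) = α i • c x^(α - e_i)` for a constant `c`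
(`deriv_mon`): every `x j` with `j ≠ i` is killed by `δ i`, and `δ i (x i) = 1` is central.

*Uniqueness* (`eq_zero_of_sum_eq_zero`) is an induction on a bound for the total degree of a
vanishing combination `∑ c_α x^α`. Applying `δ i` gives a vanishing combination of smaller degree
whose coefficients are the `α i • c_α`, so `c_α = 0` whenever some `α i` is positive, and then
`c_0 = 0` as well.

*Existence* (`mem_span_of_killed`) adjoins the variables one at a time. Suppose `a` is killed by
all `δ i` with `i > j` and `δ j ^ (k + 1) a = 0`. Then `c = δ j ^ k a` is killed by all `δ i` with
`i ≥ j`, hence is a combination of monomials in the `x i` with `i < j`, and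
`a - (k!)⁻¹ • c * x j ^ k` is killed by `δ j ^ k`. Multiplying on the right by `x j ^ k` keeps
monomials in the earlier variables ordered, so induction on `k` applies.
-/

/-- A `K`-derivation of a (possibly noncommutative) `K`-algebra `A`. -/
def IsDerivation {K A : Type*} [CommRing K] [Ring A] [Algebra K A]
    (δ : A →ₗ[K] A) : Prop :=
  ∀ a b : A, δ (a * b) = δ a * b + a * δ b

/-- The ordered monomial `x^α := x 0 ^ α 0 * x 1 ^ α 1 * ⋯ * x (s-1) ^ α (s-1)`. -/
def mon {A : Type*} [Ring A] {s : ℕ} (x : Fin s → A) (α : Fin s → ℕ) : A :=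
  ((List.finRange s).map fun i => x i ^ α i).prod

section Aux

variable {K A : Type*} [Field K] [Ring A] [Algebra K A] {s : ℕ}

/-! ### Derivations on powers and ordered monomials -/

lemma IsDerivation.map_one_eq_zero {d : A →ₗ[K] A} (hd : IsDerivation d) : d 1 = 0 := by
  have h := hd 1 1
  simpa using h

/-- The power rule holds because `d y` is a scalar. -/
lemma IsDerivation.map_pow_of_map_eq_one {d : A →ₗ[K] A} (hd : IsDerivation d) {y : A}
    (hy : d y = 1) (n : ℕ) : d (y ^ n) = (n : K) • y ^ (n - 1) := by
  induction n with
  | zero => simp [hd.map_one_eq_zero]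
  | succ n ih =>
    rw [pow_succ, hd, ih, hy]
    rcases n with _ | n
    · simp
    · simp only [Nat.add_sub_cancel, smul_mul_assoc, ← pow_succ, mul_one]
      push_cast
      module

lemma IsDerivation.map_pow_of_map_eq_zero {d : A →ₗ[K] A} (hd : IsDerivation d) {y : A}
    (hy : d y = 0) (n : ℕ) : d (y ^ n) = 0 := by
  induction n with
  | zero => simp [hd.map_one_eq_zero]
  | succ n ih => rw [pow_succ, hd, ih, hy]; simp

lemma IsDerivation.iterate_mul_pow {d : A →ₗ[K] A} (hd : IsDerivation d) {y c : A}
    (hy : d y = 1) (hc : d c = 0) (n : ℕ) :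
    (d ^ n) (c * y ^ n) = (n.factorial : K) • c := by
  induction n with
  | zero => simp
  | succ n ih =>
    rw [pow_succ, Module.End.mul_apply, hd, hc, hd.map_pow_of_map_eq_one hy]
    simp only [zero_mul, zero_add, Nat.add_sub_cancel, mul_smul_comm, map_smul, ih, smul_smul]
    rw [Nat.factorial_succ, Nat.cast_mul]

lemma list_deriv_eq_zero (δ : Fin s → (A →ₗ[K] A)) (hder : ∀ i, IsDerivation (δ i))
    (x : Fin s → A) (hx : ∀ i j, δ i (x j) = if i = j then (1 : A) else 0)
    (α : Fin s → ℕ) (i : Fin s) (l : List (Fin s)) (hi : i ∉ l) :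
    δ i (l.map fun j => x j ^ α j).prod = 0 := by
  induction l with
  | nil => simp [(hder i).map_one_eq_zero]
  | cons h t ih =>
    simp only [List.mem_cons, not_or] at hi
    rw [List.map_cons, List.prod_cons, hder, ih hi.2,
      (hder i).map_pow_of_map_eq_zero (by rw [hx, if_neg hi.1])]
    simp

lemma list_update_of_notMem (x : Fin s → A) (α : Fin s → ℕ) (i : Fin s) (n : ℕ)
    (l : List (Fin s)) (hi : i ∉ l) :
    (l.map fun j => x j ^ Function.update α i n j) = l.map fun j => x j ^ α j := by
  refine List.map_congr_left fun j hj => ?_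
  rw [Function.update_of_ne (by rintro rfl; exact hi hj)]

lemma list_deriv (δ : Fin s → (A →ₗ[K] A)) (hder : ∀ i, IsDerivation (δ i))
    (x : Fin s → A) (hx : ∀ i j, δ i (x j) = if i = j then (1 : A) else 0)
    (α : Fin s → ℕ) (i : Fin s) (l : List (Fin s)) (hl : l.Nodup) (hi : i ∈ l) :
    δ i (l.map fun j => x j ^ α j).prod =
      (α i : K) • (l.map fun j => x j ^ Function.update α i (α i - 1) j).prod := by
  induction l with
  | nil => simp at hi
  | cons h t ih =>
    rw [List.nodup_cons] at hl
    simp only [List.map_cons, List.prod_cons]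
    rw [hder]
    by_cases hh : i = h
    · subst hh
      rw [list_deriv_eq_zero δ hder x hx α i t hl.1, list_update_of_notMem x α i _ t hl.1,
        (hder i).map_pow_of_map_eq_one (by rw [hx, if_pos rfl])]
      simp
    · have hi' : i ∈ t := by simpa [hh] using hi
      rw [ih hl.2 hi', (hder i).map_pow_of_map_eq_zero (by rw [hx, if_neg hh]),
        Function.update_of_ne (Ne.symm hh)]
      simp

/-- `∂x^α/∂x_i = α_i x^(α - e_i)`. If `α i = 0`, the truncated exponent is harmless since the
scalar vanishes. -/
lemma deriv_mon (δ : Fin s → (A →ₗ[K] A)) (hder : ∀ i, IsDerivation (δ i))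
    (x : Fin s → A) (hx : ∀ i j, δ i (x j) = if i = j then (1 : A) else 0)
    (α : Fin s → ℕ) (i : Fin s) :
    δ i (mon x α) = (α i : K) • mon x (Function.update α i (α i - 1)) :=
  list_deriv δ hder x hx α i _ (List.nodup_finRange s) (List.mem_finRange i)

lemma list_mul_pow (x : Fin s → A) (α : Fin s → ℕ) (j : Fin s) (m : ℕ)
    (hα : ∀ i, j ≤ i → α i = 0) (l : List (Fin s)) (hl : l.Pairwise (· < ·)) (hj : j ∈ l) :
    (l.map fun i => x i ^ α i).prod * x j ^ m =
      (l.map fun i => x i ^ Function.update α j m i).prod := by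
  induction l with
  | nil => simp at hj
  | cons h t ih =>
    rw [List.pairwise_cons] at hl
    simp only [List.map_cons, List.prod_cons]
    by_cases hh : j = h
    · subst hh
      have hjt : j ∉ t := fun hm => lt_irrefl _ (hl.1 j hm)
      have ht : (t.map fun i => x i ^ α i).prod = 1 := by
        refine List.prod_eq_one fun y hy => ?_
        obtain ⟨i, hi, rfl⟩ := List.mem_map.1 hy
        rw [hα i (hl.1 i hi).le, pow_zero]
      rw [list_update_of_notMem x α j m t hjt, ht, hα j le_rfl]
      simp
    · have hj' : j ∈ t := by simpa [hh] using hj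
      rw [mul_assoc, ih hl.2 hj', Function.update_of_ne (Ne.symm hh)]

/-- A monomial in the variables before `x j` stays ordered when multiplied on the right by a power
of `x j`. -/
lemma mon_mul_pow (x : Fin s → A) (α : Fin s → ℕ) (j : Fin s) (m : ℕ)
    (hα : ∀ i, j ≤ i → α i = 0) :
    mon x α * x j ^ m = mon x (Function.update α j m) :=
  list_mul_pow x α j m hα _ (List.pairwise_lt_finRange s) (List.mem_finRange j)

lemma mon_zero (x : Fin s → A) : mon x (0 : Fin s → ℕ) = 1 := by
  refine List.prod_eq_one fun y hy => ?_
  obtain ⟨i, -, rfl⟩ := List.mem_map.1 hy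
  simp

/-! ### Existence of the expansion -/

/-- Finite sums of terms `c * x^α` with `c` killed by all `δ i`, where `x^α` involves only the
variables `x i` with `i < n`. -/
def constSpan (δ : Fin s → (A →ₗ[K] A)) (x : Fin s → A) (n : ℕ) : AddSubmonoid A :=
  AddSubmonoid.closure {b | ∃ (c : A) (α : Fin s → ℕ), (∀ i, δ i c = 0) ∧
    (∀ i : Fin s, n ≤ (i : ℕ) → α i = 0) ∧ b = c * mon x α}

lemma smul_mul_pow_mem_constSpan (δ : Fin s → (A →ₗ[K] A)) (x : Fin s → A) (j : Fin s)
    (r : K) (m : ℕ) (a : A) (ha : a ∈ constSpan δ x j) :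
    r • (a * x j ^ m) ∈ constSpan δ x (j + 1) := by
  induction ha using AddSubmonoid.closure_induction with
  | mem b hb =>
    obtain ⟨c, α, hc, hα, rfl⟩ := hb
    refine AddSubmonoid.subset_closure
      ⟨r • c, Function.update α j m, fun i => by rw [map_smul, hc, smul_zero], ?_, ?_⟩
    · intro i hi
      have hij : i ≠ j := by rintro rfl; omega
      rw [Function.update_of_ne hij]
      exact hα i (by omega)
    · rw [mul_assoc, mon_mul_pow x α j m (fun i hi => hα i hi), smul_mul_assoc]
  | zero => simp
  | add b₁ b₂ _ _ h₁ h₂ => rw [add_mul, smul_add]; exact add_mem h₁ h₂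

/-- With `n = s` the hypothesis on `a` is void, which gives existence of the expansion. -/
lemma mem_span_of_killed [CharZero K] (δ : Fin s → (A →ₗ[K] A))
    (hder : ∀ i, IsDerivation (δ i))
    (hcomm : ∀ i j, (δ i).comp (δ j) = (δ j).comp (δ i))
    (hln : ∀ i (a : A), ∃ k : ℕ, (δ i ^ k) a = 0)
    (x : Fin s → A) (hx : ∀ i j, δ i (x j) = if i = j then (1 : A) else 0)
    (n : ℕ) (hn : n ≤ s) (a : A) (ha : ∀ i : Fin s, n ≤ (i : ℕ) → δ i a = 0) :
    a ∈ constSpan δ x n := by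
  induction n generalizing a with
  | zero =>
    refine AddSubmonoid.subset_closure ⟨a, 0, fun i => ha i (Nat.zero_le _), by simp, ?_⟩
    rw [mon_zero, mul_one]
  | succ n ih =>
    let j : Fin s := ⟨n, hn⟩
    have hC : ∀ i k, Commute (δ i) (δ j ^ k) := fun i k => Commute.pow_right (hcomm i j) k
    obtain ⟨k, hk⟩ := hln j a
    induction k generalizing a with
    | zero =>
      have : a = 0 := by simpa using hk
      rw [this]; exact zero_mem _
    | succ k ihk =>
      set c := (δ j ^ k) a with hc
      have hcj : δ j c = 0 := by rw [hc, ← Module.End.mul_apply, ← pow_succ', hk]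
      have hcn : ∀ i : Fin s, n ≤ (i : ℕ) → δ i c = 0 := by
        intro i hi
        rcases hi.eq_or_lt with h | h
        · have : i = j := Fin.ext h.symm
          rw [this, hcj]
        · rw [hc, ← Module.End.mul_apply, (hC i k).eq, Module.End.mul_apply, ha i h, map_zero]
      have hk0 : (k.factorial : K) ≠ 0 := Nat.cast_ne_zero.2 k.factorial_ne_zero
      have h₁ := smul_mul_pow_mem_constSpan δ x j (k.factorial : K)⁻¹ k c
        (ih (by omega) c hcn)
      have h₂ : a - (k.factorial : K)⁻¹ • (c * x j ^ k) ∈ constSpan δ x (n + 1) := by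
        refine ihk _ (fun i hi => ?_) ?_
        · have hij : i ≠ j := by
            rintro rfl
            exact absurd hi (by simp [j])
          rw [map_sub, ha i hi, map_smul, hder, hcn i (by omega),
            (hder i).map_pow_of_map_eq_zero (by rw [hx, if_neg hij])]
          simp
        · rw [map_sub, map_smul, (hder j).iterate_mul_pow (by rw [hx, if_pos rfl]) hcj,
            smul_smul, inv_mul_cancel₀ hk0, one_smul, hc, sub_self]
      have := add_mem h₂ h₁
      rwa [sub_add_cancel] at this

lemma exists_finsupp_of_mem (δ : Fin s → (A →ₗ[K] A)) (x : Fin s → A) (n : ℕ) (a : A)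
    (ha : a ∈ constSpan δ x n) :
    ∃ c : (Fin s → ℕ) →₀ A, (∀ α i, δ i (c α) = 0) ∧ a = c.sum fun α v => v * mon x α := by
  classical
  induction ha using AddSubmonoid.closure_induction with
  | mem b hb =>
    obtain ⟨c, α, hc, -, rfl⟩ := hb
    refine ⟨Finsupp.single α c, fun β i => ?_, ?_⟩
    · rw [Finsupp.single_apply]
      split_ifs
      · exact hc i
      · exact map_zero _
    · rw [Finsupp.sum_single_index (zero_mul _)]
  | zero => exact ⟨0, by simp, by simp⟩
  | add b₁ b₂ _ _ h₁ h₂ =>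
    obtain ⟨c₁, hc₁, rfl⟩ := h₁
    obtain ⟨c₂, hc₂, rfl⟩ := h₂
    refine ⟨c₁ + c₂, fun α i => by rw [Finsupp.add_apply, map_add, hc₁, hc₂, add_zero], ?_⟩
    rw [Finsupp.sum_add_index' (fun _ => zero_mul _) (fun _ _ _ => add_mul _ _ _)]

/-! ### Uniqueness of the expansion -/

/-- The coefficients of the formal derivative of `∑ c_α x^α` with respect to `x i`. -/
noncomputable def coeffDeriv (K : Type*) {A : Type*} [Field K] [Ring A] [Algebra K A] {s : ℕ}
    (i : Fin s) (c : (Fin s → ℕ) →₀ A) : (Fin s → ℕ) →₀ A :=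
  c.sum fun α v => Finsupp.single (Function.update α i (α i - 1)) ((α i : K) • v)

lemma coeffDeriv_apply (i : Fin s) (c : (Fin s → ℕ) →₀ A) (β : Fin s → ℕ) :
    coeffDeriv K i c β =
      ((β i + 1 : ℕ) : K) • c (Function.update β i (β i + 1)) := by
  classical
  rw [coeffDeriv, Finsupp.sum_apply, Finsupp.sum,
    Finset.sum_eq_single (Function.update β i (β i + 1))]
  · simp
  · intro α _ hα
    rw [Finsupp.single_apply]
    split_ifs with h
    · subst h
      -- `α - e_i = β` but `α ≠ β + e_i`: only possible through truncation, i.e. `α i = 0`.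
      rcases Nat.eq_zero_or_pos (α i) with h0 | h0
      · simp [h0]
      · refine absurd ?_ hα
        simp [Nat.sub_add_cancel h0]
    · rfl
  · intro h
    rw [Finsupp.notMem_support_iff.1 h]
    simp

lemma coeffDeriv_sum (δ : Fin s → (A →ₗ[K] A)) (hder : ∀ i, IsDerivation (δ i))
    (x : Fin s → A) (hx : ∀ i j, δ i (x j) = if i = j then (1 : A) else 0)
    (i : Fin s) (c : (Fin s → ℕ) →₀ A) (hc : ∀ α i, δ i (c α) = 0) :
    ((coeffDeriv K i c).sum fun α v => v * mon x α) =
      δ i (c.sum fun α v => v * mon x α) := by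
  rw [coeffDeriv, Finsupp.sum_sum_index (fun _ => zero_mul _) (fun _ _ _ => add_mul _ _ _),
    map_finsuppSum]
  refine Finsupp.sum_congr fun α _ => ?_
  rw [Finsupp.sum_single_index (zero_mul _), hder, hc, deriv_mon δ hder x hx]
  simp

lemma eq_zero_of_sum_eq_zero [CharZero K] (δ : Fin s → (A →ₗ[K] A))
    (hder : ∀ i, IsDerivation (δ i))
    (x : Fin s → A) (hx : ∀ i j, δ i (x j) = if i = j then (1 : A) else 0) (d : ℕ)
    (c : (Fin s → ℕ) →₀ A) (hc : ∀ α i, δ i (c α) = 0)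
    (hd : ∀ α, c α ≠ 0 → ∑ i, α i < d) (h0 : (c.sum fun α v => v * mon x α) = 0) :
    c = 0 := by
  classical
  induction d generalizing c with
  | zero =>
    ext α
    by_contra h
    exact absurd (hd α h) (Nat.not_lt_zero _)
  | succ d ih =>
    have hder0 : ∀ i, coeffDeriv K i c = 0 := by
      intro i
      refine ih _ (fun α j => ?_) (fun β hβ => ?_) ?_
      · rw [coeffDeriv_apply, map_smul, hc, smul_zero]
      · rw [coeffDeriv_apply] at hβ
        have h := hd _ (right_ne_zero_of_smul hβ)
        rw [Finset.sum_update_of_mem (Finset.mem_univ i)] at h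
        rw [← Finset.add_sum_erase _ _ (Finset.mem_univ i), Finset.erase_eq]
        omega
      · rw [coeffDeriv_sum δ hder x hx i c hc, h0, map_zero]
    have hne : ∀ α, α ≠ 0 → c α = 0 := by
      intro α hα
      obtain ⟨i, hi⟩ := Function.ne_iff.1 hα
      have hi' : 1 ≤ α i := Nat.one_le_iff_ne_zero.2 hi
      have h := DFunLike.congr_fun (hder0 i) (Function.update α i (α i - 1))
      rw [coeffDeriv_apply] at h
      simp only [Function.update_self, Function.update_idem, Nat.sub_add_cancel hi',
        Function.update_eq_self, Finsupp.coe_zero, Pi.zero_apply] at h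
      exact (smul_eq_zero.1 h).resolve_left (Nat.cast_ne_zero.2 hi)
    have hs : c = Finsupp.single 0 (c 0) := by
      ext α
      rw [Finsupp.single_apply]
      split_ifs with h
      · rw [h]
      · exact hne α (Ne.symm h)
    rw [hs, Finsupp.sum_single_index (zero_mul _), mon_zero, mul_one] at h0
    rw [hs, h0, Finsupp.single_zero]

end Aux

/-- **Corollary.** Let `δ_1, …, δ_s` be commuting locally nilpotent
`K`-derivations of `A` (char `K = 0`) with `δ_i(x_j) = δ_{ij}` for some
`x_1, …, x_s ∈ A`, and let `C := ∩ ker δ_i`. Then all commutators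
`[x_i, x_j]` lie in `C`, and `A = ⊕_{α ∈ ℕ^s} C·x^α`: every `a ∈ A` is a
unique finite sum `Σ_α c_α x^α` with all `c_α ∈ C` (so the ordered monomials
`x^α` are a basis of `A` as a free left `C`-module). -/
theorem free_module_over_constants
    {K A : Type*} [Field K] [CharZero K] [Ring A] [Algebra K A]
    {s : ℕ} (δ : Fin s → (A →ₗ[K] A))
    (hder : ∀ i, IsDerivation (δ i))
    (hcomm : ∀ i j, (δ i).comp (δ j) = (δ j).comp (δ i))
    (hln : ∀ i (a : A), ∃ k : ℕ, (δ i ^ k) a = 0)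
    (x : Fin s → A)
    (hx : ∀ i j, δ i (x j) = if i = j then (1 : A) else 0) :
    -- the commutators `[x_i, x_j]` lie in `C = ∩ ker δ_k`
    (∀ i j k, δ k (x i * x j - x j * x i) = 0) ∧
    -- unique representation `a = Σ_α c_α x^α` with `c_α ∈ C`
    (∀ a : A, ∃! c : (Fin s → ℕ) →₀ A,
      (∀ α i, δ i (c α) = 0) ∧ a = c.sum fun α v => v * mon x α) := by
  refine ⟨fun i j k => ?_, fun a => ?_⟩
  · rw [map_sub, hder, hder, hx, hx]
    split_ifs <;> simp [add_comm]
  · obtain ⟨c, hc, hca⟩ := exists_finsupp_of_mem δ x s a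
      (mem_span_of_killed δ hder hcomm hln x hx s le_rfl a
        fun i hi => absurd i.isLt (Nat.not_lt.2 hi))
    refine ⟨c, ⟨hc, hca⟩, ?_⟩
    rintro c' ⟨hc', hca'⟩
    rw [← sub_eq_zero]
    refine eq_zero_of_sum_eq_zero δ hder x hx
      ((c' - c).support.sup (fun α => ∑ i, α i) + 1) _ (fun α i => ?_) (fun α hα => ?_) ?_
    · rw [Finsupp.sub_apply, map_sub, hc', hc, sub_zero]
    · exact Nat.lt_succ_of_le (Finset.le_sup (f := fun α : Fin s → ℕ => ∑ i, α i)
        (Finsupp.mem_support_iff.2 hα))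
    · rw [Finsupp.sum_sub_index (fun _ _ _ => sub_mul _ _ _), ← hca', ← hca, sub_self]
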